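/- Let n ≥ 2 and let τ, τ' be traces on TLhat_{n+1}(q). If τ(m) = τ'(m) for every Markov element m of TLhat_{n+1}(q), then τ = τ'. -/

import Mathlib

namespace AffineTL

open FreeAlgebra

/-- Cyclic successor on `Fin m`. -/
def csucc {m : ℕ} (i : Fin m) : Fin m := ⟨(i.val + 1) % m, Nat.mod_lt _ i.pos⟩

/-- The defining relations of the affine Temperley–Lieb algebra `TLhat_m(q)` with `m`
generators (indexed so that `g_{σ_i}` has index `i - 1` and `g_{a_m}` has index `m - 1`).
For `m = 1` the unique generator is set to `0`, so that `TLhat_1(q) ≅ K`. -/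
inductive ATLRel {K : Type*} [CommRing K] (q : K) (m : ℕ) :
    FreeAlgebra K (Fin m) → FreeAlgebra K (Fin m) → Prop
  | degen (h : m ≤ 1) (i : Fin m) : ATLRel q m (ι K i) 0
  | quad (h : 2 ≤ m) (i : Fin m) :
      ATLRel q m (ι K i * ι K i) ((q - 1) • ι K i + algebraMap K _ q)
  | comm (h : 3 ≤ m) (i j : Fin m) (h1 : i ≠ j) (h2 : j ≠ csucc i) (h3 : i ≠ csucc j) :
      ATLRel q m (ι K i * ι K j) (ι K j * ι K i)
  | braid (h : 3 ≤ m) (i : Fin m) :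
      ATLRel q m (ι K i * ι K (csucc i) * ι K i) (ι K (csucc i) * ι K i * ι K (csucc i))
  | vrel (h : 3 ≤ m) (i : Fin m) :
      ATLRel q m (ι K i * ι K (csucc i) * ι K i + ι K i * ι K (csucc i) + ι K (csucc i) * ι K i
        + ι K i + ι K (csucc i) + 1) 0

/-- The affine Temperley–Lieb algebra `TLhat_m(q)` of type `Ã`. -/
abbrev ATL (K : Type*) [CommRing K] (q : K) (m : ℕ) : Type _ := RingQuot (ATLRel q m)

/-- The generators of `TLhat_m(q)`. -/
noncomputable def g {K : Type*} [CommRing K] (q : K) (m : ℕ) (i : Fin m) : ATL K q m :=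
  RingQuot.mkAlgHom K (ATLRel q m) (ι K i)

/-- The defining relations of the type `A` Temperley–Lieb algebra `TL_n(q)` with `n`
generators (`g_{σ_i}` has index `i - 1`). -/
inductive TLARel {K : Type*} [CommRing K] (q : K) (n : ℕ) :
    FreeAlgebra K (Fin n) → FreeAlgebra K (Fin n) → Prop
  | quad (i : Fin n) :
      TLARel q n (ι K i * ι K i) ((q - 1) • ι K i + algebraMap K _ q)
  | comm (i j : Fin n) (h : i.val + 2 ≤ j.val ∨ j.val + 2 ≤ i.val) :
      TLARel q n (ι K i * ι K j) (ι K j * ι K i)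
  | braid (i j : Fin n) (h : j.val = i.val + 1) :
      TLARel q n (ι K i * ι K j * ι K i) (ι K j * ι K i * ι K j)
  | vrel (i j : Fin n) (h : j.val = i.val + 1) :
      TLARel q n (ι K i * ι K j * ι K i + ι K i * ι K j + ι K j * ι K i
        + ι K i + ι K j + 1) 0

/-- The type `A` Temperley–Lieb algebra `TL_n(q)`. -/
abbrev TLA (K : Type*) [CommRing K] (q : K) (n : ℕ) : Type _ := RingQuot (TLARel q n)

/-- The generators of `TL_n(q)`. -/
noncomputable def gA {K : Type*} [CommRing K] (q : K) (n : ℕ) (i : Fin n) : TLA K q n :=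
  RingQuot.mkAlgHom K (TLARel q n) (ι K i)

/-- The formal inverse `q⁻¹·(x − (q−1))` of an element satisfying `x² = (q−1)x + q`. -/
noncomputable def qinv {K : Type*} [CommRing K] (q : K) {A : Type*} [Ring A] [Algebra K A]
    (x : A) : A :=
  Ring.inverse q • (x - algebraMap K A (q - 1))

/-- A trace on a `K`-algebra: a `K`-linear form vanishing on commutators. -/
def IsTrace {K : Type*} [CommRing K] {A : Type*} [Ring A] [Algebra K A]
    (τ : A →ₗ[K] K) : Prop :=
  ∀ x y : A, τ (x * y) = τ (y * x)

/-- The element `G = g_{σ_n}⋯g_{σ_1}·g_{a_{n+1}}` of `TLhat_{n+1}(q)`. -/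
noncomputable def bigG {K : Type*} [CommRing K] (q : K) (n : ℕ) : ATL K q (n + 1) :=
  (List.ofFn fun j : Fin n => g q (n + 1) ⟨n - 1 - j.val, by omega⟩).prod *
    g q (n + 1) (Fin.last n)

/-- The inverse `G⁻¹ = g_{a_{n+1}}⁻¹·g_{σ_1}⁻¹⋯g_{σ_n}⁻¹` of `bigG`. -/
noncomputable def bigGinv {K : Type*} [CommRing K] (q : K) (n : ℕ) : ATL K q (n + 1) :=
  qinv q (g q (n + 1) (Fin.last n)) *
    (List.ofFn fun j : Fin n => qinv q (g q (n + 1) j.castSucc)).prod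

end AffineTL

namespace AffineTL

/-- `F` is the canonical homomorphism `F_m : TLhat_m(q) → TLhat_{m+1}(q)`:
`t_{σ_i} ↦ g_{σ_i}` for `1 ≤ i ≤ m−1` and `t_{a_m} ↦ g_{σ_m}·g_{a_{m+1}}·g_{σ_m}⁻¹`. -/
def isF {K : Type*} [CommRing K] (q : K) (m : ℕ) (hm : 2 ≤ m)
    (F : ATL K q m →ₐ[K] ATL K q (m + 1)) : Prop :=
  (∀ i : ℕ, ∀ hi : i < m - 1,
      F (g q m ⟨i, by omega⟩) = g q (m + 1) ⟨i, by omega⟩) ∧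
  F (g q m ⟨m - 1, by omega⟩) =
    g q (m + 1) ⟨m - 1, by omega⟩ * g q (m + 1) ⟨m, by omega⟩ *
      qinv q (g q (m + 1) ⟨m - 1, by omega⟩)

end AffineTL

namespace AffineTL

/-- A Markov element of `TLhat_{n+1}(q)`: an element of the form `A·g_{σ_n}^ε·B` with
`A, B` in the image of `F_n` and `ε ∈ {0, 1}`. -/
def IsMarkov {K : Type*} [CommRing K] {q : K} (n : ℕ) (hn : 1 ≤ n)
    (F : ATL K q n →ₐ[K] ATL K q (n + 1)) (x : ATL K q (n + 1)) : Prop :=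
  ∃ a b : ATL K q (n + 1), a ∈ F.range ∧ b ∈ F.range ∧
    (x = a * b ∨ x = a * g q (n + 1) ⟨n - 1, by omega⟩ * b)

end AffineTL

/-!
Let `D = τ - τ'`, and use the generators `e = g + 1`. Write `E` and `N` for the elements obtained
from `g_{σ_n}` and `g_{a_{n+1}}`. By induction on `k`, the trace `D` kills all words of length at
most `k`. A word without `N` reduces to words with at most one `E`, killed by hypothesis. A word
containing `N` is, up to cyclic rotation, a product of blocks `N * c` in which `c` is a word in the
other generators, and `c` can be brought to one of three forms: it is free of `E` (short), it is
`x * E * y` with `x` commuting with `N` (a descent), or it is the stair `e 0 * e 1 * ⋯ * E`.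

If `ε` is the image under `F_n` of the shifted generator `t_{a_n} + 1`, then modulo shorter words
`N * E * y * N * E = -q • (N * E * y * ε)` and `E * N * y * E * N = -(ε * y * E * N)` for every
word `y` free of `E` and `N`. Hence a product of descents reduces to some `a * (N * E) * b`, and a
power of the stair block to some `b * (E * N)`, with `a` and `b` in the image of `F_n`. These are
combinations of Markov elements, because `N * E = q • (E - ε * E)` and
`E * N = E - q⁻¹ • (E * ε)`, and the same holds for a single short block, because
`N = ε - E + E * N + q⁻¹ • (N * E)`. In every other cyclic word, a short block or a stair followed
by a descent makes the word equal to a combination of shorter ones.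
-/

namespace AffineTL

section WordSpan

variable {K A : Type*} [CommRing K] [Ring A] [Algebra K A]

/-- The span of the products of at most `k` of the elements `e i` with `i ∈ I`. -/
def wordSpan (K : Type*) {A : Type*} [CommRing K] [Ring A] [Algebra K A] (e : ℕ → A)
    (I : Set ℕ) (k : ℕ) : Submodule K A :=
  (1 ⊔ Submodule.span K (e '' I)) ^ k

/-- The span of the products `x * c * y`, where `x` and `y` are products of elements `e i` with
`i ∈ I` and `i ∈ J` respectively, of total length at most `k` when `c` counts as one letter. -/
def sandwichSpan (K : Type*) {A : Type*} [CommRing K] [Ring A] [Algebra K A] (e : ℕ → A)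
    (c : A) (I J : Set ℕ) (k : ℕ) : Submodule K A :=
  Submodule.span K {z | ∃ a b, a + b + 1 ≤ k ∧
    ∃ x ∈ wordSpan K e I a, ∃ y ∈ wordSpan K e J b, x * c * y = z}

variable {e : ℕ → A} {I J : Set ℕ} {a b k : ℕ} {c x y : A}

theorem wordSpan_mono (hIJ : I ⊆ J) (hab : a ≤ b) : wordSpan K e I a ≤ wordSpan K e J b :=
  (pow_le_pow_left' (sup_le_sup_left (Submodule.span_mono (Set.image_mono hIJ)) _) a).trans
    (pow_le_pow_right' le_sup_left hab)

theorem wordSpan_empty : wordSpan K e ∅ k = 1 := by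
  simp [wordSpan]

theorem one_mem_wordSpan : (1 : A) ∈ wordSpan K e I k :=
  Submodule.one_le.1 (one_le_pow_of_one_le' le_sup_left k)

theorem gen_mem_wordSpan {i : ℕ} (hi : i ∈ I) (hk : 1 ≤ k) : e i ∈ wordSpan K e I k := by
  refine wordSpan_mono subset_rfl hk ?_
  rw [wordSpan, pow_one]
  exact Submodule.mem_sup_right (Submodule.subset_span ⟨i, hi, rfl⟩)

theorem mul_mem_wordSpan (hx : x ∈ wordSpan K e I a) (hy : y ∈ wordSpan K e I b)
    (hk : a + b ≤ k) : x * y ∈ wordSpan K e I k := by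
  refine wordSpan_mono subset_rfl hk ?_
  rw [wordSpan, pow_add]
  exact Submodule.mul_mem_mul hx hy

theorem wordSpan_le {T : ℕ → Submodule K A} (hT : Monotone T) (hone : 1 ∈ T 0)
    (hmul : ∀ i ∈ I, ∀ k, ∀ x ∈ wordSpan K e I k, x ∈ T k → e i * x ∈ T (k + 1)) (k : ℕ) :
    wordSpan K e I k ≤ T k := by
  induction k with
  | zero => simpa [wordSpan, Submodule.one_le] using hone
  | succ k ih =>
    rw [wordSpan, pow_succ', Submodule.sup_mul, one_mul]
    refine sup_le (ih.trans (hT k.le_succ)) (Submodule.mul_le.2 fun m hm x hx => ?_)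
    suffices Submodule.span K (e '' I) ≤ (T (k + 1)).comap (LinearMap.mulRight K x) from this hm
    rw [Submodule.span_le]
    rintro _ ⟨i, hi, rfl⟩
    exact hmul i hi k x hx (ih hx)

theorem commute_of_mem_wordSpan (h : ∀ i ∈ I, Commute c (e i)) (hx : x ∈ wordSpan K e I k) :
    Commute c x := by
  have hle : wordSpan K e I k ≤ Subalgebra.toSubmodule (Subalgebra.centralizer K {c}) := by
    refine wordSpan_le (T := fun _ => _) monotone_const (Subalgebra.one_mem _) ?_ k
    intro i hi _ y _ hy
    refine Subalgebra.mul_mem _ ?_ hy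
    simpa [Subalgebra.mem_centralizer_iff] using (h i hi).eq
  simpa [Subalgebra.mem_centralizer_iff, commute_iff_eq] using hle hx

theorem wordSpan_le_toSubmodule {B : Subalgebra K A} (h : ∀ i ∈ I, e i ∈ B) :
    wordSpan K e I k ≤ Subalgebra.toSubmodule B :=
  wordSpan_le (T := fun _ => _) monotone_const B.one_mem
    (fun i hi _ _ _ hx => B.mul_mem (h i hi) hx) k

theorem exists_mem_wordSpan (h : Algebra.adjoin K (e '' I) = ⊤) (x : A) :
    ∃ k, x ∈ wordSpan K e I k := by
  induction (h ▸ Algebra.mem_top : x ∈ Algebra.adjoin K (e '' I)) using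
    Algebra.adjoin_induction with
  | mem x hx =>
    obtain ⟨i, hi, rfl⟩ := hx
    exact ⟨1, gen_mem_wordSpan hi le_rfl⟩
  | algebraMap r =>
    rw [Algebra.algebraMap_eq_smul_one]
    exact ⟨0, Submodule.smul_mem _ r one_mem_wordSpan⟩
  | add x y _ _ hx hy =>
    obtain ⟨⟨a, ha⟩, ⟨b, hb⟩⟩ := And.intro hx hy
    exact ⟨max a b, add_mem (wordSpan_mono subset_rfl (le_max_left a b) ha)
      (wordSpan_mono subset_rfl (le_max_right a b) hb)⟩
  | mul x y _ _ hx hy =>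
    obtain ⟨⟨a, ha⟩, ⟨b, hb⟩⟩ := And.intro hx hy
    exact ⟨a + b, mul_mem_wordSpan ha hb le_rfl⟩

theorem mem_sandwichSpan (hx : x ∈ wordSpan K e I a) (hy : y ∈ wordSpan K e J b)
    (hk : a + b + 1 ≤ k) : x * c * y ∈ sandwichSpan K e c I J k :=
  Submodule.subset_span ⟨a, b, hk, x, hx, y, hy, rfl⟩

theorem sandwichSpan_le {T : Submodule K A}
    (h : ∀ a b, a + b + 1 ≤ k → ∀ x ∈ wordSpan K e I a, ∀ y ∈ wordSpan K e J b, x * c * y ∈ T) :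
    sandwichSpan K e c I J k ≤ T := by
  refine Submodule.span_le.2 ?_
  rintro _ ⟨a, b, hk, x, hx, y, hy, rfl⟩
  exact h a b hk x hx y hy

theorem sandwichSpan_mono (hab : a ≤ b) :
    sandwichSpan K e c I J a ≤ sandwichSpan K e c I J b :=
  sandwichSpan_le fun _ _ hk _ hx _ hy => mem_sandwichSpan hx hy (hk.trans hab)

theorem sandwichSpan_le_wordSpan {L : Set ℕ} (hI : I ⊆ L) (hJ : J ⊆ L)
    (hc : c ∈ wordSpan K e L 1) : sandwichSpan K e c I J k ≤ wordSpan K e L k :=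
  sandwichSpan_le fun _ _ hk _ hx _ hy => mul_mem_wordSpan
    (mul_mem_wordSpan (wordSpan_mono hI le_rfl hx) hc le_rfl) (wordSpan_mono hJ le_rfl hy)
    (by omega)

theorem map_mem_of_mem_sup_sandwichSpan {M : Type*} [AddCommGroup M] [Module K M]
    {T : Submodule K M} (φ : A →ₗ[K] M) (hI : ∀ x ∈ wordSpan K e I k, φ x ∈ T)
    (hc : ∀ a b, a + b + 1 ≤ k → ∀ x ∈ wordSpan K e I a, ∀ y ∈ wordSpan K e J b,
      φ (x * c * y) ∈ T)
    (hx : x ∈ wordSpan K e I k ⊔ sandwichSpan K e c I J k) : φ x ∈ T := by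
  have hle : wordSpan K e I k ⊔ sandwichSpan K e c I J k ≤ T.comap φ :=
    sup_le hI (sandwichSpan_le hc)
  exact hle hx

theorem gen_mul_mem_sup_sandwichSpan {i : ℕ} (hi : i ∈ I)
    (hx : x ∈ wordSpan K e I k ⊔ sandwichSpan K e c I J k) :
    e i * x ∈ wordSpan K e I (k + 1) ⊔ sandwichSpan K e c I J (k + 1) := by
  have hei : e i ∈ wordSpan K e I 1 := gen_mem_wordSpan hi le_rfl
  refine map_mem_of_mem_sup_sandwichSpan (LinearMap.mulLeft K (e i))
    (fun x hx => Submodule.mem_sup_left (mul_mem_wordSpan hei hx (by omega)))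
    (fun a b hk x hx y hy => Submodule.mem_sup_right ?_) hx
  rw [LinearMap.mulLeft_apply, ← mul_assoc, ← mul_assoc]
  exact mem_sandwichSpan (mul_mem_wordSpan hei hx le_rfl) hy (by omega)

theorem mul_mem_sandwichSpan (hx : x ∈ sandwichSpan K e c I J a) (hy : y ∈ wordSpan K e J b)
    (hk : a + b ≤ k) : x * y ∈ sandwichSpan K e c I J k := by
  have hle : sandwichSpan K e c I J a ≤
      (sandwichSpan K e c I J k).comap (LinearMap.mulRight K y) := by
    refine sandwichSpan_le fun a' b' hk' x' hx' y' hy' => ?_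
    rw [Submodule.mem_comap, LinearMap.mulRight_apply, mul_assoc]
    exact mem_sandwichSpan hx' (mul_mem_wordSpan hy' hy le_rfl) (by omega)
  exact hle hx

theorem monotone_sup_sandwichSpan :
    Monotone fun k => wordSpan K e I k ⊔ sandwichSpan K e c I J k :=
  fun _ _ hab => sup_le_sup (wordSpan_mono subset_rfl hab) (sandwichSpan_mono hab)

theorem wordSpan_insert_le (j k : ℕ) : wordSpan K e (insert j I) k ≤
    wordSpan K e I k ⊔ sandwichSpan K e (e j) I (insert j I) k := by
  refine wordSpan_le monotone_sup_sandwichSpan (Submodule.mem_sup_left one_mem_wordSpan) ?_ k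
  rintro i (rfl | hi) k x hx hxT
  · simpa using Submodule.mem_sup_right
      (mem_sandwichSpan (one_mem_wordSpan (k := 0)) hx (by omega))
  · exact gen_mul_mem_sup_sandwichSpan hi hxT

theorem wordSpan_insert_le_of_sandwich {j : ℕ}
    (h : ∀ k, ∀ x ∈ wordSpan K e I k, e j * x * e j ∈ sandwichSpan K e (e j) I I (k + 1))
    (k : ℕ) :
    wordSpan K e (insert j I) k ≤ wordSpan K e I k ⊔ sandwichSpan K e (e j) I I k := by
  refine wordSpan_le monotone_sup_sandwichSpan (Submodule.mem_sup_left one_mem_wordSpan) ?_ k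
  rintro i (rfl | hi) k x - hx
  · refine Submodule.mem_sup_right (map_mem_of_mem_sup_sandwichSpan (LinearMap.mulLeft K (e i))
      (fun x hx => ?_) (fun a b hk x hx y hy => ?_) hx)
    · simpa using mem_sandwichSpan (c := e i) (one_mem_wordSpan (k := 0)) hx (by omega)
    · rw [LinearMap.mulLeft_apply, ← mul_assoc, ← mul_assoc]
      exact mul_mem_sandwichSpan (h a x hx) hy (by omega)
  · exact gen_mul_mem_sup_sandwichSpan hi hx

end WordSpan

section TemperleyLieb

variable {K A : Type*} [CommRing K] [Ring A] [Algebra K A]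

/-- The relations of a type `A` Temperley–Lieb algebra for `f 0, …, f m`, normalised so that
`f i * f i = (q + 1) • f i`; the later values of `f` are unconstrained. -/
structure IsTemperleyLieb (q : K) (m : ℕ) (f : ℕ → A) : Prop where
  sq : ∀ i ≤ m, f i * f i = (q + 1) • f i
  up : ∀ i < m, f i * f (i + 1) * f i = q • f i
  down : ∀ i < m, f (i + 1) * f i * f (i + 1) = q • f (i + 1)
  comm : ∀ i j, i + 2 ≤ j → j ≤ m → Commute (f i) (f j)

variable {q : K} {m h k : ℕ} {f : ℕ → A} {x : A}

theorem Iio_succ_eq_insert (m : ℕ) : Set.Iio (m + 1) = insert m (Set.Iio m) := by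
  ext i
  simp only [Set.mem_Iio, Set.mem_insert_iff]
  omega

namespace IsTemperleyLieb

theorem mono (hf : IsTemperleyLieb q m f) (hh : h ≤ m) : IsTemperleyLieb q h f where
  sq i hi := hf.sq i (hi.trans hh)
  up i hi := hf.up i (hi.trans_le hh)
  down i hi := hf.down i (hi.trans_le hh)
  comm i j hij hj := hf.comm i j hij (hj.trans hh)

theorem commute_wordSpan_Iio (hf : IsTemperleyLieb q (m + 1) f)
    (hx : x ∈ wordSpan K f (Set.Iio m) k) : Commute (f (m + 1)) x :=
  commute_of_mem_wordSpan
    (fun i hi => (hf.comm i (m + 1) (by simp only [Set.mem_Iio] at hi; omega) le_rfl).symm) hx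

theorem mul_mul_mem_sandwichSpan (hf : IsTemperleyLieb q m f)
    (hx : x ∈ wordSpan K f (Set.Iio m) k) :
    f m * x * f m ∈ sandwichSpan K f (f m) (Set.Iio m) (Set.Iio m) (k + 1) := by
  induction m generalizing k x with
  | zero =>
    rw [Set.Iio_zero_eq_empty, wordSpan_empty, Submodule.mem_one] at hx
    obtain ⟨r, rfl⟩ := hx
    rw [Algebra.algebraMap_eq_smul_one, mul_smul_comm, mul_one, smul_mul_assoc, hf.sq 0 le_rfl]
    refine Submodule.smul_mem _ _ (Submodule.smul_mem _ _ ?_)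
    simpa using mem_sandwichSpan (c := f 0) (one_mem_wordSpan (k := 0)) one_mem_wordSpan
      (Nat.le_add_left (0 + 0 + 1) k)
  | succ m ih =>
    have hI : Set.Iio m ⊆ Set.Iio (m + 1) := Set.Iio_subset_Iio m.le_succ
    rw [Iio_succ_eq_insert] at hx
    refine map_mem_of_mem_sup_sandwichSpan (LinearMap.mulLeftRight K (f (m + 1), f (m + 1)))
      (fun x hx => ?_) (fun a b hk x hx y hy => ?_)
      (wordSpan_insert_le_of_sandwich (fun k x => ih (hf.mono m.le_succ)) k hx) <;>
      rw [LinearMap.mulLeftRight_apply]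
    · rw [(hf.commute_wordSpan_Iio hx).eq, mul_assoc, hf.sq _ le_rfl, mul_smul_comm]
      refine Submodule.smul_mem _ _ ?_
      simpa using mem_sandwichSpan (c := f (m + 1)) (wordSpan_mono hI le_rfl hx)
        (one_mem_wordSpan (k := 0)) le_rfl
    · have hslide : f (m + 1) * (x * f m * y) * f (m + 1) = q • (x * f (m + 1) * y) :=
        calc f (m + 1) * (x * f m * y) * f (m + 1)
            = f (m + 1) * x * f m * (y * f (m + 1)) := by simp only [mul_assoc]
          _ = x * (f (m + 1) * f m * f (m + 1)) * y := by
            rw [(hf.commute_wordSpan_Iio hx).eq, ← (hf.commute_wordSpan_Iio hy).eq]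
            simp only [mul_assoc]
          _ = q • (x * f (m + 1) * y) := by
            rw [hf.down m m.lt_succ_self, mul_smul_comm, smul_mul_assoc]
      rw [hslide]
      exact Submodule.smul_mem _ _ (mem_sandwichSpan (wordSpan_mono hI le_rfl hx)
        (wordSpan_mono hI le_rfl hy) (by omega))

theorem wordSpan_Iio_succ_le (hf : IsTemperleyLieb q m f) (k : ℕ) :
    wordSpan K f (Set.Iio (m + 1)) k ≤
      wordSpan K f (Set.Iio m) k ⊔ sandwichSpan K f (f m) (Set.Iio m) (Set.Iio m) k := by
  rw [Iio_succ_eq_insert]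
  exact wordSpan_insert_le_of_sandwich (fun _ _ => hf.mul_mul_mem_sandwichSpan) k

end IsTemperleyLieb

end TemperleyLieb

section NormalForm

variable {K A : Type*} [CommRing K] [Ring A] [Algebra K A]

/-- The ascending product `f 0 * f 1 * ⋯ * f (m - 1)`. -/
def stair (f : ℕ → A) (m : ℕ) : A := ((List.range m).map f).prod

/-- The elements `x * f m * y`, of length at most `k`, where `x` is a product of letters strictly
between `0` and `m` and `y` is a product of letters below `m`. -/
def IsDescent (K : Type*) {A : Type*} [CommRing K] [Ring A] [Algebra K A] (f : ℕ → A)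
    (m k : ℕ) (c : A) : Prop :=
  0 < m ∧ ∃ a b, a + b + 1 ≤ k ∧
    ∃ x ∈ wordSpan K f (Set.Ico 1 m) a, ∃ y ∈ wordSpan K f (Set.Iio m) b, c = x * f m * y

/-- The normal forms of length at most `k` in the letters `f 0, …, f m`: either `f m` is absent,
or its single occurrence has no `f 0` on its left, or the element is the full ascending product. -/
def IsNormalForm (K : Type*) {A : Type*} [CommRing K] [Ring A] [Algebra K A] (f : ℕ → A)
    (m k : ℕ) (c : A) : Prop :=
  c ∈ wordSpan K f (Set.Iio m) k ∨ IsDescent K f m k c ∨ m + 1 ≤ k ∧ c = stair f (m + 1)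

variable {q : K} {m i j k : ℕ} {f : ℕ → A} {c x y : A}

theorem stair_succ (f : ℕ → A) (m : ℕ) : stair f (m + 1) = stair f m * f m := by
  simp [stair, List.range_succ]

theorem stair_mem_wordSpan (f : ℕ → A) (m : ℕ) : stair f m ∈ wordSpan K f (Set.Iio m) m := by
  induction m with
  | zero => exact one_mem_wordSpan
  | succ m ih =>
    rw [stair_succ]
    exact mul_mem_wordSpan (wordSpan_mono (Set.Iio_subset_Iio m.le_succ) le_rfl ih)
      (gen_mem_wordSpan m.lt_succ_self le_rfl) le_rfl

theorem IsNormalForm.mono (hc : IsNormalForm K f m i c) (hij : i ≤ j) :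
    IsNormalForm K f m j c := by
  obtain hc | ⟨hm, a, b, hab, hc⟩ | ⟨hi, rfl⟩ := hc
  · exact Or.inl (wordSpan_mono subset_rfl hij hc)
  · exact Or.inr (Or.inl ⟨hm, a, b, hab.trans hij, hc⟩)
  · exact Or.inr (Or.inr ⟨hi.trans hij, rfl⟩)

theorem IsNormalForm.mem_wordSpan (hc : IsNormalForm K f m k c) :
    c ∈ wordSpan K f (Set.Iio (m + 1)) k := by
  have hI : Set.Iio m ⊆ Set.Iio (m + 1) := Set.Iio_subset_Iio m.le_succ
  obtain hc | ⟨-, a, b, hab, x, hx, y, hy, rfl⟩ | ⟨hk, rfl⟩ := hc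
  · exact wordSpan_mono hI le_rfl hc
  · exact mul_mem_wordSpan (mul_mem_wordSpan
      (wordSpan_mono (Set.Ico_subset_Iio_self.trans hI) le_rfl hx)
      (gen_mem_wordSpan m.lt_succ_self le_rfl) le_rfl) (wordSpan_mono hI le_rfl hy) (by omega)
  · exact wordSpan_mono subset_rfl hk (stair_mem_wordSpan f (m + 1))

namespace IsTemperleyLieb

theorem stair_succ_mul_gen_mem (hf : IsTemperleyLieb q m f) (hi : i < m) :
    stair f (m + 1) * f i ∈ wordSpan K f (Set.Iio (m + 1)) (m + 1) := by
  induction m with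
  | zero => exact absurd hi i.not_lt_zero
  | succ m ih =>
    rw [stair_succ]
    obtain rfl | hi' := Nat.eq_or_lt_of_le (Nat.le_of_lt_succ hi)
    · have hfold : stair f (i + 1) * f (i + 1) * f i = q • stair f (i + 1) := by
        rw [stair_succ, mul_assoc, mul_assoc, ← mul_assoc (f i), hf.up i hi, mul_smul_comm]
      rw [hfold]
      exact Submodule.smul_mem _ _ (wordSpan_mono (Set.Iio_subset_Iio (i + 1).le_succ)
        (i + 1).le_succ (stair_mem_wordSpan f (i + 1)))
    · rw [mul_assoc, ← (hf.comm i (m + 1) (by omega) le_rfl).eq, ← mul_assoc]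
      exact mul_mem_wordSpan (wordSpan_mono (Set.Iio_subset_Iio (m + 1).le_succ) le_rfl
        (ih (hf.mono m.le_succ) hi')) (gen_mem_wordSpan (m + 1).lt_succ_self le_rfl) le_rfl

theorem stair_succ_mul_mem (hf : IsTemperleyLieb q m f) (hx : x ∈ wordSpan K f (Set.Iio m) k) :
    stair f (m + 1) * x ∈
      Submodule.span K {stair f (m + 1)} ⊔ wordSpan K f (Set.Iio (m + 1)) (m + k) := by
  refine wordSpan_le (T := fun k => Submodule.comap (LinearMap.mulLeft K (stair f (m + 1)))
    (Submodule.span K {stair f (m + 1)} ⊔ wordSpan K f (Set.Iio (m + 1)) (m + k)))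
    (fun a b hab => Submodule.comap_mono (sup_le_sup_left (wordSpan_mono subset_rfl (by omega)) _))
    ?_ (fun i hi k x hx _ => Submodule.mem_sup_right ?_) k hx
  · simpa using Submodule.mem_sup_left (Submodule.mem_span_singleton_self _)
  · rw [LinearMap.mulLeft_apply, ← mul_assoc]
    exact mul_mem_wordSpan (hf.stair_succ_mul_gen_mem hi)
      (wordSpan_mono (Set.Iio_subset_Iio m.le_succ) le_rfl hx) (by omega)

theorem normalForm_mul_gen_mul_mem (hf : IsTemperleyLieb q (m + 1) f)
    (hc : IsNormalForm K f m i c) (hy : y ∈ wordSpan K f (Set.Iio (m + 1)) j) (hk : i + j + 1 ≤ k)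
    (ih : ∀ l < k, wordSpan K f (Set.Iio (m + 2)) l ≤
      Submodule.span K {c | IsNormalForm K f (m + 1) l c}) :
    c * f (m + 1) * y ∈ Submodule.span K {c | IsNormalForm K f (m + 1) k c} := by
  have hI : Set.Iio m ⊆ Set.Iio (m + 1) := Set.Iio_subset_Iio m.le_succ
  obtain hc | ⟨hm, a, b, hab, x, hx, z, hz, rfl⟩ | ⟨hi, rfl⟩ := hc
  · refine Submodule.subset_span (Or.inr (Or.inl ⟨m.succ_pos, 0, i + j, by omega, 1,
      one_mem_wordSpan, c * y, mul_mem_wordSpan (wordSpan_mono hI le_rfl hc) hy le_rfl, ?_⟩))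
    rw [← (hf.commute_wordSpan_Iio hc).eq, one_mul, mul_assoc]
  · refine Submodule.subset_span (Or.inr (Or.inl ⟨m.succ_pos, a + 1, b + j, by omega, x * f m, ?_,
      z * y, mul_mem_wordSpan (wordSpan_mono hI le_rfl hz) hy le_rfl, ?_⟩))
    · exact mul_mem_wordSpan (wordSpan_mono (Set.Ico_subset_Ico_right m.le_succ) le_rfl hx)
        (gen_mem_wordSpan ⟨hm, m.lt_succ_self⟩ le_rfl) le_rfl
    · rw [mul_assoc (x * f m), ← (hf.commute_wordSpan_Iio hz).eq]
      simp only [mul_assoc]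
  · rw [← stair_succ]
    refine (sup_le ?_ ?_ : _ ≤ Submodule.span K {c | IsNormalForm K f (m + 1) k c})
      (hf.stair_succ_mul_mem hy)
    · rw [Submodule.span_singleton_le_iff_mem]
      exact Submodule.subset_span (Or.inr (Or.inr ⟨by omega, rfl⟩))
    · exact (ih (m + 1 + j) (by omega)).trans
        (Submodule.span_mono fun c hc => hc.mono (by omega))

theorem wordSpan_le_span_isNormalForm (hf : IsTemperleyLieb q m f) (k : ℕ) :
    wordSpan K f (Set.Iio (m + 1)) k ≤ Submodule.span K {c | IsNormalForm K f m k c} := by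
  induction m generalizing k with
  | zero =>
    refine (hf.wordSpan_Iio_succ_le k).trans (sup_le (fun c hc => Submodule.subset_span
      (Or.inl hc)) (sandwichSpan_le fun a b hk x hx y hy => ?_))
    rw [Set.Iio_zero_eq_empty, wordSpan_empty, Submodule.mem_one] at hx hy
    obtain ⟨⟨r, rfl⟩, ⟨s, rfl⟩⟩ := And.intro hx hy
    rw [← Algebra.smul_def, ← Algebra.commutes, ← Algebra.smul_def]
    exact Submodule.smul_mem _ _ (Submodule.smul_mem _ _ (Submodule.subset_span
      (Or.inr (Or.inr ⟨by omega, by simp [stair]⟩))))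
  | succ m ihm =>
    induction k using Nat.strong_induction_on with
    | _ k ihk =>
      refine (hf.wordSpan_Iio_succ_le k).trans (sup_le (fun c hc => Submodule.subset_span
        (Or.inl hc)) (sandwichSpan_le fun a b hk x hx y hy => ?_))
      have hle : Submodule.span K {c | IsNormalForm K f m a c} ≤ Submodule.comap
          (LinearMap.mulRight K y ∘ₗ LinearMap.mulRight K (f (m + 1)))
          (Submodule.span K {c | IsNormalForm K f (m + 1) k c}) :=
        Submodule.span_le.2 fun c hc => hf.normalForm_mul_gen_mul_mem hc hy hk ihk
      exact hle (ihm (hf.mono m.le_succ) a hx)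

end IsTemperleyLieb

end NormalForm

section AffineTemperleyLieb

variable {K A : Type*} [CommRing K] [Ring A] [Algebra K A]

/-- The relations of an affine Temperley–Lieb algebra with `d + 2` generators, where `1 ≤ d`,
normalised as in `IsTemperleyLieb`. The cyclic family of generators is encoded as a periodic
sequence. -/
structure IsAffineTemperleyLieb (q : K) (d : ℕ) (e : ℕ → A) : Prop where
  periodic : ∀ i, e (i + (d + 2)) = e i
  sq : ∀ i, e i * e i = (q + 1) • e i
  up : ∀ i, e i * e (i + 1) * e i = q • e i
  down : ∀ i, e (i + 1) * e i * e (i + 1) = q • e (i + 1)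
  comm : ∀ i j, i + 2 ≤ j → j ≤ i + d → Commute (e i) (e j)

/-- The element which becomes the last generator of the smaller affine algebra: with `u = q⁻¹` and
the elements `g + 1` for `e`, it is the image of `t_{a_{d + 1}} + 1` under `F_{d + 1}`. -/
def foldedGen (u : K) (e : ℕ → A) (d : ℕ) : A :=
  e d + e (d + 1) - e d * e (d + 1) - u • (e (d + 1) * e d)

variable {q u : K} {d a k : ℕ} {e : ℕ → A} {x y : A}

theorem penultimate_mem_wordSpan (e : ℕ → A) (d : ℕ) : e d ∈ wordSpan K e (Set.Iio (d + 2)) 1 :=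
  gen_mem_wordSpan (by simp) le_rfl

theorem last_mem_wordSpan (e : ℕ → A) (d : ℕ) : e (d + 1) ∈ wordSpan K e (Set.Iio (d + 2)) 1 :=
  gen_mem_wordSpan (by simp) le_rfl

theorem foldedGen_mem_wordSpan (u : K) (e : ℕ → A) (d : ℕ) :
    foldedGen u e d ∈ wordSpan K e (Set.Iio (d + 2)) 2 := by
  have hE := penultimate_mem_wordSpan (K := K) e d
  have hN := last_mem_wordSpan (K := K) e d
  exact sub_mem (sub_mem (add_mem (wordSpan_mono subset_rfl one_le_two hE)
    (wordSpan_mono subset_rfl one_le_two hN)) (mul_mem_wordSpan hE hN le_rfl))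
    (Submodule.smul_mem _ _ (mul_mem_wordSpan hN hE le_rfl))

namespace IsAffineTemperleyLieb

theorem isTemperleyLieb (he : IsAffineTemperleyLieb q d e) : IsTemperleyLieb q d e where
  sq i _ := he.sq i
  up i _ := he.up i
  down i _ := he.down i
  comm i j hij hj := he.comm i j hij (by omega)

theorem isTemperleyLieb_reverse (he : IsAffineTemperleyLieb q d e) :
    IsTemperleyLieb q d (fun i => e (2 * d + 1 - i)) where
  sq i _ := he.sq _
  up i hi := by
    simpa only [show 2 * d + 1 - i = 2 * d + 1 - (i + 1) + 1 by omega] using he.down _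
  down i hi := by
    simpa only [show 2 * d + 1 - i = 2 * d + 1 - (i + 1) + 1 by omega] using he.up _
  comm i j hij hj := (he.comm _ _ (by omega) (by omega)).symm

theorem image_reverse_Iio (he : IsAffineTemperleyLieb q d e) :
    (fun i => e (2 * d + 1 - i)) '' Set.Iio d = e '' Set.Iio d := by
  have hrev {i : ℕ} (hi : i < d) : e (2 * d + 1 - i) = e (d - 1 - i) := by
    rw [← he.periodic (d - 1 - i)]
    congr 1
    omega
  ext x
  constructor
  · rintro ⟨i, hi, rfl⟩
    exact ⟨d - 1 - i, Set.mem_Iio.2 (by simp only [Set.mem_Iio] at hi; omega), (hrev hi).symm⟩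
  · rintro ⟨i, hi, rfl⟩
    rw [Set.mem_Iio] at hi
    refine ⟨d - 1 - i, Set.mem_Iio.2 (by omega), (hrev (by omega)).trans ?_⟩
    congr 1
    omega

theorem penultimate_mul_mul_mem (he : IsAffineTemperleyLieb q d e)
    (hx : x ∈ wordSpan K e (Set.Iio d) k) :
    e d * x * e d ∈ wordSpan K e (Set.Iio (d + 2)) (k + 1) :=
  have hd : Set.Iio d ⊆ Set.Iio (d + 2) := Set.Iio_subset_Iio (by omega)
  sandwichSpan_le_wordSpan hd hd (penultimate_mem_wordSpan e d)
    (he.isTemperleyLieb.mul_mul_mem_sandwichSpan hx)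

theorem last_mul_mul_mem (he : IsAffineTemperleyLieb q d e)
    (hx : x ∈ wordSpan K e (Set.Iio d) k) :
    e (d + 1) * x * e (d + 1) ∈ wordSpan K e (Set.Iio (d + 2)) (k + 1) := by
  have hd : Set.Iio d ⊆ Set.Iio (d + 2) := Set.Iio_subset_Iio (by omega)
  have hx' : x ∈ wordSpan K (fun i => e (2 * d + 1 - i)) (Set.Iio d) k := by
    simpa only [wordSpan, he.image_reverse_Iio] using hx
  have h := he.isTemperleyLieb_reverse.mul_mul_mem_sandwichSpan hx'
  simp only [sandwichSpan, wordSpan, he.image_reverse_Iio,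
    show 2 * d + 1 - d = d + 1 by omega] at h
  exact sandwichSpan_le_wordSpan hd hd (last_mem_wordSpan e d) h

theorem commute_last (he : IsAffineTemperleyLieb q d e)
    (hx : x ∈ wordSpan K e (Set.Ico 1 d) k) : Commute (e (d + 1)) x :=
  commute_of_mem_wordSpan (fun i hi => (he.comm i (d + 1) (by simp only [Set.mem_Ico] at hi; omega)
    (by simp only [Set.mem_Ico] at hi; omega)).symm) hx

theorem foldedGen_mul_penultimate (he : IsAffineTemperleyLieb q d e) (hu : u * q = 1) :
    foldedGen u e d * e d = e d - u • (e (d + 1) * e d) := by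
  simp only [foldedGen, sub_mul, add_mul, smul_mul_assoc, mul_assoc, he.sq, mul_smul_comm]
  rw [← mul_assoc, he.up, smul_smul, mul_add, hu]
  module

theorem penultimate_mul_foldedGen (he : IsAffineTemperleyLieb q d e) (hu : u * q = 1) :
    e d * foldedGen u e d = q • (e d - e d * e (d + 1)) := by
  simp only [foldedGen, mul_sub, mul_add, mul_smul_comm, ← mul_assoc, he.sq, smul_mul_assoc, he.up,
    smul_smul, hu]
  module

theorem last_mul_swap_mem (he : IsAffineTemperleyLieb q d e) (hu : u * q = 1)
    (hy : y ∈ wordSpan K e (Set.Iio d) a) :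
    e (d + 1) * e d * y * (e (d + 1) * e d + q • foldedGen u e d) ∈
      wordSpan K e (Set.Iio (d + 2)) (a + 3) := by
  have hE := penultimate_mem_wordSpan (K := K) e d
  have hN := last_mem_wordSpan (K := K) e d
  have hEyE := mul_mem_wordSpan hN (he.penultimate_mul_mul_mem hy) le_rfl
  have hNEyN := mul_mem_wordSpan (mul_mem_wordSpan (mul_mem_wordSpan hN hE le_rfl)
    (wordSpan_mono (Set.Iio_subset_Iio (by omega)) le_rfl hy) le_rfl) hN
    (show 1 + 1 + a + 1 ≤ a + 3 by omega)
  have hexpand : e (d + 1) * e d * y * (e (d + 1) * e d + q • foldedGen u e d) =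
      q • (e (d + 1) * (e d * y * e d)) + q • (e (d + 1) * e d * y * e (d + 1)) -
        q • (e (d + 1) * (e d * y * e d) * e (d + 1)) := by
    have hu' : q * u = 1 := by rw [mul_comm, hu]
    simp only [foldedGen, mul_sub, mul_add, smul_sub, smul_add, smul_smul, mul_smul_comm, hu',
      mul_assoc]
    module
  rw [hexpand]
  exact sub_mem (add_mem (Submodule.smul_mem _ _ (wordSpan_mono subset_rfl (by omega) hEyE))
    (Submodule.smul_mem _ _ hNEyN))
    (Submodule.smul_mem _ _ (mul_mem_wordSpan hEyE hN (by omega)))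

theorem swap_mul_last_mem (he : IsAffineTemperleyLieb q d e)
    (hy : y ∈ wordSpan K e (Set.Iio d) a) :
    (e d * e (d + 1) + foldedGen u e d) * y * (e d * e (d + 1)) ∈
      wordSpan K e (Set.Iio (d + 2)) (a + 3) := by
  have hE := penultimate_mem_wordSpan (K := K) e d
  have hN := last_mem_wordSpan (K := K) e d
  have hEyE := mul_mem_wordSpan (he.penultimate_mul_mul_mem hy) hN le_rfl
  have hNyEN := mul_mem_wordSpan (mul_mem_wordSpan hN
    (wordSpan_mono (Set.Iio_subset_Iio (by omega)) le_rfl hy) le_rfl)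
    (mul_mem_wordSpan hE hN le_rfl) (show 1 + a + (1 + 1) ≤ a + 3 by omega)
  have hexpand : (e d * e (d + 1) + foldedGen u e d) * y * (e d * e (d + 1)) =
      e d * y * e d * e (d + 1) + e (d + 1) * y * (e d * e (d + 1)) -
        u • (e (d + 1) * (e d * y * e d * e (d + 1))) := by
    simp only [foldedGen, sub_mul, add_mul, smul_mul_assoc, mul_assoc]
    abel
  rw [hexpand]
  exact sub_mem (add_mem (wordSpan_mono subset_rfl (by omega) hEyE) hNyEN)
    (Submodule.smul_mem _ _ (mul_mem_wordSpan hN hEyE (by omega)))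

end IsAffineTemperleyLieb

end AffineTemperleyLieb

section BlockWeight

variable {α : Type*}

theorem exists_adjacent {P : α → Prop} {a : α} {l : List α} (ha : P a)
    (hl : ∃ c ∈ l, ¬P c) : ∃ l₁ b c l₂, a :: l = l₁ ++ b :: c :: l₂ ∧ P b ∧ ¬P c := by
  induction l generalizing a with
  | nil => simp at hl
  | cons c l ih =>
    by_cases hc : P c
    · obtain ⟨l₁, b, c', l₂, heq, hb, hc'⟩ := ih hc (by simpa [hc] using hl)
      exact ⟨a :: l₁, b, c', l₂, by rw [heq, List.cons_append], hb, hc'⟩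
    · exact ⟨[], a, c, l, rfl, ha, hc⟩

/-- The length of a product of blocks `e (d + 1) * c` over the pairs `(k, c)` in `l`, where `k` is a
bound for the length of `c`. -/
def blockWeight (l : List (ℕ × α)) : ℕ :=
  (l.map fun p => p.1 + 1).sum

variable {l l' : List (ℕ × α)} {p : ℕ × α}

@[simp]
theorem blockWeight_nil : blockWeight ([] : List (ℕ × α)) = 0 := rfl

@[simp]
theorem blockWeight_cons : blockWeight (p :: l) = p.1 + 1 + blockWeight l := by
  simp [blockWeight]

@[simp]
theorem blockWeight_append : blockWeight (l ++ l') = blockWeight l + blockWeight l' := by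
  simp [blockWeight]

end BlockWeight

section Blocks

variable {K A : Type*} [CommRing K] [Ring A] [Algebra K A]

/-- The product of the blocks `e (d + 1) * c` over the pairs `(k, c)` in `l`. -/
def blockProd (e : ℕ → A) (d : ℕ) (l : List (ℕ × A)) : A :=
  (l.map fun p => e (d + 1) * p.2).prod

/-- The span of the nonempty products of blocks `e (d + 1) * c` with `c` in normal form, of total
length at most `k`. -/
def blockSpan (K : Type*) {A : Type*} [CommRing K] [Ring A] [Algebra K A] (e : ℕ → A)
    (d k : ℕ) : Submodule K A :=
  Submodule.span K {z | ∃ l : List (ℕ × A), l ≠ [] ∧ blockWeight l ≤ k ∧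
    (∀ p ∈ l, IsNormalForm K e d p.1 p.2) ∧ blockProd e d l = z}

variable {q u : K} {d k : ℕ} {e : ℕ → A} {x : A} {B : Subalgebra K A}
  {l l' : List (ℕ × A)} {p r : ℕ × A}

@[simp]
theorem blockProd_nil : blockProd e d [] = 1 := rfl

@[simp]
theorem blockProd_cons : blockProd e d (p :: l) = e (d + 1) * p.2 * blockProd e d l := by
  simp [blockProd]

@[simp]
theorem blockProd_append : blockProd e d (l ++ l') = blockProd e d l * blockProd e d l' := by
  simp [blockProd]

theorem last_mul_mem_wordSpan (hp : IsNormalForm K e d p.1 p.2) :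
    e (d + 1) * p.2 ∈ wordSpan K e (Set.Iio (d + 2)) (p.1 + 1) :=
  mul_mem_wordSpan (last_mem_wordSpan e d)
    (wordSpan_mono (Set.Iio_subset_Iio (d + 1).le_succ) le_rfl hp.mem_wordSpan) (by omega)

theorem blockProd_mem_wordSpan (hl : ∀ p ∈ l, IsNormalForm K e d p.1 p.2) :
    blockProd e d l ∈ wordSpan K e (Set.Iio (d + 2)) (blockWeight l) := by
  induction l with
  | nil => exact one_mem_wordSpan
  | cons p l ih =>
    rw [List.forall_mem_cons] at hl
    rw [blockProd_cons]
    exact mul_mem_wordSpan (last_mul_mem_wordSpan hl.1) (ih hl.2) blockWeight_cons.ge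

theorem exists_blockProd_mem_of_adjacent {l₁ l₂ : List (ℕ × A)}
    (hl : ∀ s ∈ l₁ ++ p :: r :: l₂, IsNormalForm K e d s.1 s.2)
    (hpr : e (d + 1) * p.2 * (e (d + 1) * r.2) ∈
      wordSpan K e (Set.Iio (d + 2)) (p.1 + r.1 + 1)) :
    ∃ k < blockWeight (l₁ ++ p :: r :: l₂),
      blockProd e d (l₁ ++ p :: r :: l₂) ∈ wordSpan K e (Set.Iio (d + 2)) k := by
  have h₁ := blockProd_mem_wordSpan (l := l₁) fun s hs => hl s (by simp [hs])
  have h₂ := blockProd_mem_wordSpan (l := l₂) fun s hs => hl s (by simp [hs])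
  refine ⟨blockWeight l₁ + (p.1 + r.1 + 1 + blockWeight l₂), by simp only [blockWeight_append, blockWeight_cons]; omega, ?_⟩
  rw [blockProd_append, blockProd_cons, blockProd_cons, ← mul_assoc (_ * p.2)]
  exact mul_mem_wordSpan h₁ (mul_mem_wordSpan hpr h₂ le_rfl) le_rfl

theorem blockSpan_mono {i j : ℕ} (hij : i ≤ j) : blockSpan K e d i ≤ blockSpan K e d j :=
  Submodule.span_mono fun _ ⟨l, hne, hl, h⟩ => ⟨l, hne, hl.trans hij, h⟩

theorem last_mul_mul_mem_blockSpan {i j : ℕ} {c z : A} (hc : IsNormalForm K e d i c)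
    (hz : z ∈ blockSpan K e d j) : e (d + 1) * c * z ∈ blockSpan K e d (i + 1 + j) := by
  have hle : blockSpan K e d j ≤
      (blockSpan K e d (i + 1 + j)).comap (LinearMap.mulLeft K (e (d + 1) * c)) := by
    refine Submodule.span_le.2 ?_
    rintro _ ⟨l, -, hl, h, rfl⟩
    refine Submodule.subset_span ⟨(i, c) :: l, by simp, by simpa using hl, ?_, blockProd_cons⟩
    exact List.forall_mem_cons.2 ⟨hc, h⟩
  exact hle hz

namespace IsAffineTemperleyLieb

theorem last_mul_mem_blockSpan (he : IsAffineTemperleyLieb q d e)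
    (hx : x ∈ wordSpan K e (Set.Iio (d + 2)) k) : e (d + 1) * x ∈ blockSpan K e d (k + 1) := by
  induction k using Nat.strong_induction_on generalizing x with
  | _ k ih =>
    have hnf := he.isTemperleyLieb.wordSpan_le_span_isNormalForm
    rw [Iio_succ_eq_insert] at hx
    refine map_mem_of_mem_sup_sandwichSpan (LinearMap.mulLeft K (e (d + 1)))
      (fun x hx => ?_) (fun a b hk x hx y hy => ?_) (wordSpan_insert_le (d + 1) k hx)
    · have hle : Submodule.span K {c | IsNormalForm K e d k c} ≤
          (blockSpan K e d (k + 1)).comap (LinearMap.mulLeft K (e (d + 1))) :=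
        Submodule.span_le.2 fun c hc => Submodule.subset_span
          ⟨[(k, c)], by simp, by simp, by simpa using hc, by simp⟩
      exact hle (hnf k hx)
    · rw [← Iio_succ_eq_insert] at hy
      have hle : Submodule.span K {c | IsNormalForm K e d a c} ≤
          (blockSpan K e d (k + 1)).comap
            (LinearMap.mulLeftRight K (e (d + 1), e (d + 1) * y)) :=
        Submodule.span_le.2 fun c hc => blockSpan_mono (by omega)
          (last_mul_mul_mem_blockSpan hc (ih b (by omega) hy))
      rw [LinearMap.mulLeft_apply, mul_assoc, ← mul_assoc]
      exact hle (hnf a hx)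

theorem stair_mul_last_mul_penultimate (he : IsAffineTemperleyLieb q d e) :
    stair e (d + 1) * (e (d + 1) * e d) = q • stair e (d + 1) := by
  rw [stair_succ, mul_assoc, ← mul_assoc (e d), he.up, mul_smul_comm]

theorem stair_mul_descent_mem (he : IsAffineTemperleyLieb q d e)
    (hp : d + 1 ≤ p.1 ∧ p.2 = stair e (d + 1)) (hr : IsDescent K e d r.1 r.2) :
    e (d + 1) * p.2 * (e (d + 1) * r.2) ∈ wordSpan K e (Set.Iio (d + 2)) (p.1 + r.1 + 1) := by
  obtain ⟨hk, hp⟩ := hp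
  obtain ⟨-, a, b, hab, x, hx, y, hy, hr⟩ := hr
  have hE := penultimate_mem_wordSpan (K := K) e d
  have hN := last_mem_wordSpan (K := K) e d
  have hI : Set.Iio (d + 1) ⊆ Set.Iio (d + 2) := Set.Iio_subset_Iio (d + 1).le_succ
  have hy' : y ∈ wordSpan K e (Set.Iio (d + 2)) b :=
    wordSpan_mono (Set.Iio_subset_Iio (by omega)) le_rfl hy
  have hslide : e (d + 1) * p.2 * (e (d + 1) * r.2) =
      e (d + 1) * (stair e (d + 1) * x) * (e (d + 1) * e d * y) := by
    rw [hp, hr, ← mul_assoc (e (d + 1)) (x * e d), ← mul_assoc (e (d + 1)) x,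
      (he.commute_last hx).eq]
    simp only [mul_assoc]
  have hle : Submodule.span K {stair e (d + 1)} ⊔ wordSpan K e (Set.Iio (d + 1)) (d + a) ≤
      (wordSpan K e (Set.Iio (d + 2)) (p.1 + r.1 + 1)).comap
        (LinearMap.mulLeftRight K (e (d + 1), e (d + 1) * e d * y)) := by
    refine sup_le ((Submodule.span_singleton_le_iff_mem _ _).2 ?_) fun z hz => ?_
    · rw [Submodule.mem_comap, LinearMap.mulLeftRight_apply, mul_assoc,
        ← mul_assoc (stair e (d + 1)), he.stair_mul_last_mul_penultimate, smul_mul_assoc,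
        mul_smul_comm, ← mul_assoc]
      have hstair := wordSpan_mono (K := K) hI le_rfl (stair_mem_wordSpan e (d + 1))
      exact Submodule.smul_mem _ _
        (mul_mem_wordSpan (mul_mem_wordSpan hN hstair le_rfl) hy' (by omega))
    · rw [Submodule.mem_comap, LinearMap.mulLeftRight_apply]
      have hz' := wordSpan_mono hI le_rfl hz
      exact mul_mem_wordSpan (mul_mem_wordSpan hN hz' le_rfl)
        (mul_mem_wordSpan (mul_mem_wordSpan hN hE le_rfl) hy' le_rfl) (by omega)
  rw [hslide]
  exact hle (he.isTemperleyLieb.stair_succ_mul_mem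
    (wordSpan_mono Set.Ico_subset_Iio_self le_rfl hx))

theorem short_mul_mem (he : IsAffineTemperleyLieb q d e) (hp : p.2 ∈ wordSpan K e (Set.Iio d) p.1)
    (hr : IsNormalForm K e d r.1 r.2) :
    e (d + 1) * p.2 * (e (d + 1) * r.2) ∈ wordSpan K e (Set.Iio (d + 2)) (p.1 + r.1 + 1) := by
  rw [← mul_assoc]
  exact mul_mem_wordSpan (he.last_mul_mul_mem hp)
    (wordSpan_mono (Set.Iio_subset_Iio (d + 1).le_succ) le_rfl hr.mem_wordSpan) (by omega)

theorem mul_swap_sub_mem {i j i' j' k : ℕ} {x y x' b z : A} (he : IsAffineTemperleyLieb q d e)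
    (hu : u * q = 1) (hx : x ∈ wordSpan K e (Set.Iio d) i) (hy : y ∈ wordSpan K e (Set.Iio d) j)
    (hx' : x' ∈ wordSpan K e (Set.Iio d) i') (hb : b ∈ wordSpan K e (Set.Iio (d + 2)) j')
    (hz : z - x' * (e (d + 1) * e d) * b ∈ wordSpan K e (Set.Iio (d + 2)) k)
    (hk : i' + j' + 1 ≤ k) :
    x * (e (d + 1) * e d) * y * z -
        x * (e (d + 1) * e d) * -(q • (y * x' * foldedGen u e d * b)) ∈
      wordSpan K e (Set.Iio (d + 2)) (i + j + 2 + k) := by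
  have hd : Set.Iio d ⊆ Set.Iio (d + 2) := Set.Iio_subset_Iio (by omega)
  have hNE := mul_mem_wordSpan (last_mem_wordSpan (K := K) e d)
    (penultimate_mem_wordSpan e d) le_rfl
  have hxd := wordSpan_mono hd le_rfl hx
  have hswap : x * (e (d + 1) * e d * (y * x') * (e (d + 1) * e d + q • foldedGen u e d)) * b ∈
      wordSpan K e (Set.Iio (d + 2)) (i + j + 2 + k) :=
    mul_mem_wordSpan (mul_mem_wordSpan hxd
      (he.last_mul_swap_mem hu (mul_mem_wordSpan hy hx' le_rfl)) le_rfl) hb (by omega)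
  have hrest : x * (e (d + 1) * e d) * y * (z - x' * (e (d + 1) * e d) * b) ∈
      wordSpan K e (Set.Iio (d + 2)) (i + j + 2 + k) :=
    mul_mem_wordSpan (mul_mem_wordSpan (mul_mem_wordSpan hxd hNE le_rfl)
      (wordSpan_mono hd le_rfl hy) le_rfl) hz (by omega)
  convert add_mem hswap hrest using 1
  simp only [mul_add, add_mul, mul_sub, mul_neg, mul_smul_comm, smul_mul_assoc, mul_assoc]
  abel

theorem exists_descents_sub_mem (he : IsAffineTemperleyLieb q d e) (hu : u * q = 1)
    (hB : ∀ i < d, e i ∈ B) (hfold : foldedGen u e d ∈ B) (hne : l ≠ [])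
    (hl : ∀ p ∈ l, IsDescent K e d p.1 p.2) :
    ∃ i j k, i + j + 1 ≤ k ∧ k < blockWeight l ∧
      ∃ x ∈ wordSpan K e (Set.Ico 1 d) i, ∃ b ∈ wordSpan K e (Set.Iio (d + 2)) j, b ∈ B ∧
        blockProd e d l - x * (e (d + 1) * e d) * b ∈ wordSpan K e (Set.Iio (d + 2)) k := by
  induction l with
  | nil => exact absurd rfl hne
  | cons p l ih =>
    rw [List.forall_mem_cons] at hl
    obtain ⟨-, i, j, hij, x, hx, y, hy, hp⟩ := hl.1
    have hd : Set.Iio d ⊆ Set.Iio (d + 2) := Set.Iio_subset_Iio (by omega)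
    have hyB : y ∈ B := wordSpan_le_toSubmodule hB hy
    have hblock : e (d + 1) * p.2 = x * (e (d + 1) * e d) * y := by
      rw [hp, ← mul_assoc, ← mul_assoc, (he.commute_last hx).eq]
      simp only [mul_assoc]
    rw [blockProd_cons, blockWeight_cons, hblock]
    obtain rfl | hne' := eq_or_ne l []
    · exact ⟨i, j, i + j + 1, le_rfl, by omega, x, hx, y, wordSpan_mono hd le_rfl hy, hyB, by simp⟩
    obtain ⟨i', j', k, hij', hk, x', hx', b, hb, hbB, hr⟩ := ih hne' hl.2
    have hx'd : x' ∈ wordSpan K e (Set.Iio d) i' :=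
      wordSpan_mono Set.Ico_subset_Iio_self le_rfl hx'
    refine ⟨i, j + i' + 2 + j', i + j + 2 + k, by omega, by omega, x, hx,
      -(q • (y * x' * foldedGen u e d * b)), ?_, ?_, he.mul_swap_sub_mem hu
        (wordSpan_mono Set.Ico_subset_Iio_self le_rfl hx) hy hx'd hb hr hij'⟩
    · exact neg_mem (Submodule.smul_mem _ _ (mul_mem_wordSpan (mul_mem_wordSpan
        (wordSpan_mono hd le_rfl (mul_mem_wordSpan hy hx'd le_rfl)) (foldedGen_mem_wordSpan u e d)
        le_rfl) hb le_rfl))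
    · exact B.neg_mem (B.smul_mem (B.mul_mem (B.mul_mem
        (B.mul_mem hyB (wordSpan_le_toSubmodule hB hx'd)) hfold) hbB) q)

theorem exists_stairs_sub_mem (he : IsAffineTemperleyLieb q d e)
    (hB : ∀ i < d, e i ∈ B) (hfold : foldedGen u e d ∈ B) (m : ℕ) :
    ∃ b ∈ wordSpan K e (Set.Iio (d + 2)) (m * (d + 2)), b ∈ B ∧
      (stair e d * (e d * e (d + 1))) ^ (m + 1) - b * (stair e d * (e d * e (d + 1))) ∈
        wordSpan K e (Set.Iio (d + 2)) (m * (d + 2) + d + 1) := by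
  have hLB : stair e d ∈ B := wordSpan_le_toSubmodule hB (stair_mem_wordSpan e d)
  have hL : stair e d ∈ wordSpan K e (Set.Iio (d + 2)) d :=
    wordSpan_mono (Set.Iio_subset_Iio (by omega)) le_rfl (stair_mem_wordSpan e d)
  have hEN := mul_mem_wordSpan (penultimate_mem_wordSpan (K := K) e d)
    (last_mem_wordSpan e d) le_rfl
  induction m with
  | zero => exact ⟨1, one_mem_wordSpan, B.one_mem, by simp⟩
  | succ m ih =>
    obtain ⟨b, hb, hbB, hr⟩ := ih
    refine ⟨-(b * stair e d * foldedGen u e d), neg_mem (mul_mem_wordSpan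
      (mul_mem_wordSpan hb hL le_rfl) (foldedGen_mem_wordSpan u e d) (by lia)),
      B.neg_mem (B.mul_mem (B.mul_mem hbB hLB) hfold), ?_⟩
    have hswap : b * stair e d * ((e d * e (d + 1) + foldedGen u e d) * stair e d *
        (e d * e (d + 1))) ∈ wordSpan K e (Set.Iio (d + 2)) ((m + 1) * (d + 2) + d + 1) :=
      mul_mem_wordSpan (mul_mem_wordSpan hb hL le_rfl)
        (he.swap_mul_last_mem (stair_mem_wordSpan e d)) (by lia)
    have hrest := mul_mem_wordSpan hr (mul_mem_wordSpan hL hEN le_rfl)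
      (show m * (d + 2) + d + 1 + (d + (1 + 1)) ≤ (m + 1) * (d + 2) + d + 1 by lia)
    convert add_mem hrest hswap using 1
    rw [pow_succ]
    noncomm_ring

end IsAffineTemperleyLieb

end Blocks

section MarkovNull

variable {K A M : Type*} [CommRing K] [Ring A] [Algebra K A] [AddCommGroup M] [Module K M]

/-- `D` is a trace vanishing on all Markov elements. Here `B` plays the role of the image of `F_n`,
and `g_{σ_n}` is replaced by the generator `e d = g_{σ_n} + 1`. -/
structure IsMarkovNull (u : K) (e : ℕ → A) (d : ℕ) (B : Subalgebra K A) (D : A →ₗ[K] M) :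
    Prop where
  trace : ∀ x y, D (x * y) = D (y * x)
  gen_mem : ∀ i < d, e i ∈ B
  foldedGen_mem : foldedGen u e d ∈ B
  map_mem : ∀ b ∈ B, D b = 0
  map_mul_mul : ∀ a ∈ B, ∀ b ∈ B, D (a * e d * b) = 0

namespace IsMarkovNull

variable {q u : K} {d : ℕ} {e : ℕ → A} {B : Subalgebra K A} {D : A →ₗ[K] M} {a b : A}
  {l : List (ℕ × A)} {p : ℕ × A}

theorem map_mul_last_mul_penultimate_mul (hD : IsMarkovNull u e d B D)
    (he : IsAffineTemperleyLieb q d e) (hu : u * q = 1) (ha : a ∈ B) (hb : b ∈ B) :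
    D (a * (e (d + 1) * e d) * b) = 0 := by
  have hNE : e (d + 1) * e d = q • (e d - foldedGen u e d * e d) := by
    rw [he.foldedGen_mul_penultimate hu, sub_sub_cancel, smul_smul, mul_comm, hu, one_smul]
  rw [hNE, mul_smul_comm, smul_mul_assoc, map_smul, mul_sub, sub_mul, map_sub,
    hD.map_mul_mul a ha b hb, ← mul_assoc, hD.map_mul_mul _ (B.mul_mem ha hD.foldedGen_mem) b hb,
    sub_zero, smul_zero]

theorem map_mul_penultimate_mul_last_mul (hD : IsMarkovNull u e d B D)
    (he : IsAffineTemperleyLieb q d e) (hu : u * q = 1) (ha : a ∈ B) (hb : b ∈ B) :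
    D (a * (e d * e (d + 1)) * b) = 0 := by
  have hEN : e d * e (d + 1) = e d - u • (e d * foldedGen u e d) := by
    rw [he.penultimate_mul_foldedGen hu, smul_smul, hu, one_smul, sub_sub_cancel]
  rw [hEN, mul_sub, sub_mul, map_sub, hD.map_mul_mul a ha b hb, mul_smul_comm, smul_mul_assoc,
    map_smul, ← mul_assoc, mul_assoc _ _ b,
    hD.map_mul_mul a ha _ (B.mul_mem hD.foldedGen_mem hb), smul_zero, sub_zero]

theorem map_last_mul (hD : IsMarkovNull u e d B D) (he : IsAffineTemperleyLieb q d e)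
    (hu : u * q = 1) (hb : b ∈ B) : D (e (d + 1) * b) = 0 := by
  have hN : e (d + 1) * b = foldedGen u e d * b - 1 * e d * b + 1 * (e d * e (d + 1)) * b +
      u • (1 * (e (d + 1) * e d) * b) := by
    simp only [foldedGen, one_mul, sub_mul, add_mul, smul_mul_assoc]
    abel
  rw [hN, map_add, map_add, map_sub, map_smul, hD.map_mem _ (B.mul_mem hD.foldedGen_mem hb),
    hD.map_mul_mul 1 B.one_mem b hb, hD.map_mul_penultimate_mul_last_mul he hu B.one_mem hb,
    hD.map_mul_last_mul_penultimate_mul he hu B.one_mem hb]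
  simp

theorem map_mul_pow_comm (hD : IsMarkovNull u e d B D) (x y : A) (m : ℕ) :
    D ((x * y) ^ (m + 1)) = D ((y * x) ^ (m + 1)) := by
  rw [pow_succ, ← mul_assoc, mul_pow_mul, mul_assoc, hD.trace, mul_assoc, ← pow_succ]

theorem map_blockProd_of_descents (hD : IsMarkovNull u e d B D)
    (he : IsAffineTemperleyLieb q d e) (hu : u * q = 1) (hne : l ≠ [])
    (hl : ∀ p ∈ l, IsDescent K e d p.1 p.2)
    (hlow : ∀ k < blockWeight l, ∀ x ∈ wordSpan K e (Set.Iio (d + 2)) k, D x = 0) :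
    D (blockProd e d l) = 0 := by
  obtain ⟨i, j, k, -, hk, x, hx, b, -, hb, hr⟩ :=
    he.exists_descents_sub_mem hu hD.gen_mem hD.foldedGen_mem hne hl
  have hxB : x ∈ B := wordSpan_le_toSubmodule (fun i hi => hD.gen_mem i hi.2) hx
  rw [← sub_add_cancel (blockProd e d l) (x * (e (d + 1) * e d) * b), map_add, hlow k hk _ hr,
    hD.map_mul_last_mul_penultimate_mul he hu hxB hb, add_zero]

theorem map_blockProd_of_stairs (hD : IsMarkovNull u e d B D)
    (he : IsAffineTemperleyLieb q d e) (hu : u * q = 1) (hne : l ≠ [])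
    (hl : ∀ p ∈ l, d + 1 ≤ p.1 ∧ p.2 = stair e (d + 1))
    (hlow : ∀ k < blockWeight l, ∀ x ∈ wordSpan K e (Set.Iio (d + 2)) k, D x = 0) :
    D (blockProd e d l) = 0 := by
  obtain ⟨m, hm⟩ := Nat.exists_eq_succ_of_ne_zero (mt List.length_eq_zero_iff.1 hne)
  have hpow : blockProd e d l = (e (d + 1) * stair e (d + 1)) ^ (m + 1) := by
    rw [blockProd, List.prod_eq_pow_card (l.map _) (e (d + 1) * stair e (d + 1)), List.length_map,
      hm]
    exact List.forall_mem_map.2 fun p hp => by rw [(hl p hp).2]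
  have hweight : (m + 1) * (d + 2) ≤ blockWeight l := by
    have h := List.card_nsmul_le_sum (l.map fun p => p.1 + 1) (d + 2)
      (List.forall_mem_map.2 fun p hp => Nat.succ_le_succ (hl p hp).1)
    rwa [List.length_map, hm, smul_eq_mul] at h
  obtain ⟨b, -, hb, hr⟩ := he.exists_stairs_sub_mem hD.gen_mem hD.foldedGen_mem m
  have hLB : stair e d ∈ B := wordSpan_le_toSubmodule hD.gen_mem (stair_mem_wordSpan (K := K) e d)
  rw [hpow, hD.map_mul_pow_comm, stair_succ, mul_assoc,
    ← sub_add_cancel ((stair e d * (e d * e (d + 1))) ^ (m + 1))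
      (b * (stair e d * (e d * e (d + 1)))), map_add, hlow _ (by lia) _ hr, zero_add]
  simpa only [mul_assoc, mul_one] using
    hD.map_mul_penultimate_mul_last_mul he hu (B.mul_mem hb hLB) B.one_mem

theorem map_blockProd_of_short (hD : IsMarkovNull u e d B D)
    (he : IsAffineTemperleyLieb q d e) (hu : u * q = 1)
    (hp : p.2 ∈ wordSpan K e (Set.Iio d) p.1)
    (hl : ∀ r ∈ p :: l, IsNormalForm K e d r.1 r.2)
    (hlow : ∀ k < blockWeight (p :: l), ∀ x ∈ wordSpan K e (Set.Iio (d + 2)) k, D x = 0) :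
    D (blockProd e d (p :: l)) = 0 := by
  cases l with
  | nil => simpa using hD.map_last_mul he hu (wordSpan_le_toSubmodule hD.gen_mem hp)
  | cons r l =>
    obtain ⟨k, hk, hmem⟩ := exists_blockProd_mem_of_adjacent (l₁ := []) hl
      (he.short_mul_mem hp (hl r (by simp)))
    exact hlow k hk _ hmem

theorem exists_rotation (hD : IsMarkovNull u e d B D) (hp : p ∈ l) :
    ∃ l', (∀ r, r ∈ p :: l' ↔ r ∈ l) ∧ blockWeight (p :: l') = blockWeight l ∧
      D (blockProd e d (p :: l')) = D (blockProd e d l) := by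
  obtain ⟨l₁, l₂, rfl⟩ := List.append_of_mem hp
  refine ⟨l₂ ++ l₁, fun r => ?_, ?_, ?_⟩
  · simp only [List.mem_cons, List.mem_append]
    tauto
  · simp only [blockWeight_append, blockWeight_cons]
    ring
  · rw [← List.cons_append, blockProd_append, blockProd_append, hD.trace]

theorem map_blockProd_of_stair_of_descent {r : ℕ × A} (hD : IsMarkovNull u e d B D)
    (he : IsAffineTemperleyLieb q d e)
    (hl : ∀ s ∈ l, IsDescent K e d s.1 s.2 ∨ d + 1 ≤ s.1 ∧ s.2 = stair e (d + 1))
    (hp : p ∈ l) (hpstair : d + 1 ≤ p.1 ∧ p.2 = stair e (d + 1))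
    (hr : r ∈ l) (hrstair : ¬(d + 1 ≤ r.1 ∧ r.2 = stair e (d + 1)))
    (hlow : ∀ k < blockWeight l, ∀ x ∈ wordSpan K e (Set.Iio (d + 2)) k, D x = 0) :
    D (blockProd e d l) = 0 := by
  obtain ⟨l', hmem, hweight, hDl⟩ := hD.exists_rotation hp
  have hrl' : r ∈ l' := (List.mem_cons.1 ((hmem r).2 hr)).resolve_left fun h =>
    hrstair (h ▸ hpstair)
  obtain ⟨l₁, s, t, l₂, heq, hs, ht⟩ :=
    exists_adjacent (P := fun p : ℕ × A => d + 1 ≤ p.1 ∧ p.2 = stair e (d + 1)) hpstair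
      ⟨r, hrl', hrstair⟩
  have hmem' {v : ℕ × A} (hv : v ∈ l₁ ++ s :: t :: l₂) : v ∈ l := (hmem v).1 (heq ▸ hv)
  have htdesc : IsDescent K e d t.1 t.2 := (hl t (hmem' (by simp))).resolve_right ht
  obtain ⟨k, hk, hk'⟩ := exists_blockProd_mem_of_adjacent (fun v hv => Or.inr (hl v (hmem' hv)))
    (he.stair_mul_descent_mem hs htdesc)
  rw [← hDl, heq]
  exact hlow k (by rwa [← hweight, heq]) _ hk'

theorem map_blockProd_eq_zero (hD : IsMarkovNull u e d B D)
    (he : IsAffineTemperleyLieb q d e) (hu : u * q = 1) (hne : l ≠ [])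
    (hl : ∀ p ∈ l, IsNormalForm K e d p.1 p.2)
    (hlow : ∀ k < blockWeight l, ∀ x ∈ wordSpan K e (Set.Iio (d + 2)) k, D x = 0) :
    D (blockProd e d l) = 0 := by
  by_cases hshort : ∃ p ∈ l, p.2 ∈ wordSpan K e (Set.Iio d) p.1
  · obtain ⟨p, hp, hp'⟩ := hshort
    obtain ⟨l', hmem, hweight, hDl⟩ := hD.exists_rotation hp
    rw [← hDl]
    exact hD.map_blockProd_of_short he hu hp' (fun r hr => hl r ((hmem r).1 hr)) (hweight ▸ hlow)
  push Not at hshort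
  have hlong (p) (hp : p ∈ l) := (hl p hp).resolve_left (hshort p hp)
  by_cases hdesc : ∀ p ∈ l, IsDescent K e d p.1 p.2
  · exact hD.map_blockProd_of_descents he hu hne hdesc hlow
  by_cases hstair : ∀ p ∈ l, d + 1 ≤ p.1 ∧ p.2 = stair e (d + 1)
  · exact hD.map_blockProd_of_stairs he hu hne hstair hlow
  simp only [not_forall, exists_prop] at hdesc hstair
  obtain ⟨⟨p, hp, hpdesc⟩, ⟨r, hr, hrstair⟩⟩ := And.intro hdesc hstair
  exact hD.map_blockProd_of_stair_of_descent he hlong hp ((hlong p hp).resolve_left hpdesc) hr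
    hrstair hlow

theorem map_eq_zero (hD : IsMarkovNull u e d B D) (he : IsAffineTemperleyLieb q d e)
    (hu : u * q = 1) (k : ℕ) {x : A} (hx : x ∈ wordSpan K e (Set.Iio (d + 2)) k) : D x = 0 := by
  induction k using Nat.strong_induction_on generalizing x with
  | _ k ih =>
    rw [Iio_succ_eq_insert] at hx
    refine map_mem_of_mem_sup_sandwichSpan (T := ⊥) D (fun x hx => ?_)
      (fun a b hk x hx y hy => ?_) (wordSpan_insert_le (d + 1) k hx)
    · refine map_mem_of_mem_sup_sandwichSpan (T := ⊥) D (fun x hx => ?_)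
        (fun a b _ x hx y hy => ?_) (he.isTemperleyLieb.wordSpan_Iio_succ_le k hx)
      · exact hD.map_mem x (wordSpan_le_toSubmodule hD.gen_mem hx)
      · exact hD.map_mul_mul x (wordSpan_le_toSubmodule hD.gen_mem hx) y
          (wordSpan_le_toSubmodule hD.gen_mem hy)
    · rw [← Iio_succ_eq_insert] at hy
      have hyx := mul_mem_wordSpan hy
        (wordSpan_mono (Set.Iio_subset_Iio (d + 1).le_succ) le_rfl hx) le_rfl
      have hle : blockSpan K e d (b + a + 1) ≤ LinearMap.ker D := by
        refine Submodule.span_le.2 ?_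
        rintro _ ⟨l, hne, hweight, hl, rfl⟩
        exact hD.map_blockProd_eq_zero he hu hne hl fun k hk x hx => ih k (by omega) hx
      rw [Submodule.mem_bot, mul_assoc, hD.trace, mul_assoc]
      exact hle (he.last_mul_mem_blockSpan hyx)

end IsMarkovNull

end MarkovNull

section Presentation

variable {K : Type*} [CommRing K] {q : K} {m d i j : ℕ}

theorem gen_sq (hm : 2 ≤ m) (i : Fin m) :
    g q m i * g q m i = (q - 1) • g q m i + algebraMap K _ q := by
  simpa [g] using RingQuot.mkAlgHom_rel K (ATLRel.quad (q := q) hm i)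

theorem gen_commute (hm : 3 ≤ m) {i j : Fin m} (hij : i ≠ j) (hj : j ≠ csucc i)
    (hi : i ≠ csucc j) : Commute (g q m i) (g q m j) := by
  simpa [g, commute_iff_eq] using
    RingQuot.mkAlgHom_rel K (ATLRel.comm (q := q) hm i j hij hj hi)

theorem gen_braid (hm : 3 ≤ m) (i : Fin m) :
    g q m i * g q m (csucc i) * g q m i = g q m (csucc i) * g q m i * g q m (csucc i) := by
  simpa [g] using RingQuot.mkAlgHom_rel K (ATLRel.braid (q := q) hm i)

theorem gen_temperleyLieb (hm : 3 ≤ m) (i : Fin m) :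
    g q m i * g q m (csucc i) * g q m i + g q m i * g q m (csucc i) +
      g q m (csucc i) * g q m i + g q m i + g q m (csucc i) + 1 = 0 := by
  simpa [g] using RingQuot.mkAlgHom_rel K (ATLRel.vrel (q := q) hm i)

theorem adjoin_range_gen : Algebra.adjoin K (Set.range (g q m)) = ⊤ := by
  have hrange : Set.range (g q m) =
      RingQuot.mkAlgHom K (ATLRel q m) '' Set.range (FreeAlgebra.ι K) := by
    rw [← Set.range_comp]
    rfl
  rw [hrange, ← AlgHom.map_adjoin, FreeAlgebra.adjoin_range_ι, Algebra.map_top,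
    AlgHom.range_eq_top]
  exact RingQuot.mkAlgHom_surjective K _

theorem add_one_mul_self {A : Type*} [Ring A] [Algebra K A] {x : A}
    (hx : x * x = (q - 1) • x + algebraMap K A q) :
    (x + 1) * (x + 1) = (q + 1) • (x + 1) := by
  rw [add_mul, mul_add, hx, Algebra.algebraMap_eq_smul_one]
  simp only [mul_one, one_mul]
  module

theorem add_one_mul_add_one_mul_add_one {A : Type*} [Ring A] [Algebra K A] {x y : A}
    (hx : x * x = (q - 1) • x + algebraMap K A q)
    (hxy : x * y * x + x * y + y * x + x + y + 1 = 0) :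
    (x + 1) * (y + 1) * (x + 1) = q • (x + 1) := by
  have hexpand : (x + 1) * (y + 1) * (x + 1) =
      (x * y * x + x * y + y * x + x + y + 1) + (x * x + x) := by
    noncomm_ring
  rw [hexpand, hxy, hx, Algebra.algebraMap_eq_smul_one]
  module

/-- The generators of `TLhat_m(q)` shifted by `1`, which turns the relations into those of
`IsAffineTemperleyLieb`; the index is read modulo `m`. -/
noncomputable def shiftedGen (q : K) (m : ℕ) [NeZero m] (i : ℕ) : ATL K q m :=
  g q m (Fin.ofNat m i) + 1

theorem shiftedGen_of_lt [NeZero m] (hi : i < m) : shiftedGen q m i = g q m ⟨i, hi⟩ + 1 := by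
  rw [shiftedGen, Fin.ofNat]
  simp only [Nat.mod_eq_of_lt hi]

theorem csucc_ofNat [NeZero m] (i : ℕ) : csucc (Fin.ofNat m i) = Fin.ofNat m (i + 1) :=
  Fin.ext (Nat.mod_add_mod i m 1)

theorem ofNat_ne_ofNat [NeZero m] (hij : i < j) (hj : j < i + m) :
    Fin.ofNat m i ≠ Fin.ofNat m j := fun h => by
  have hdvd : m ∣ j - i := (Nat.modEq_iff_dvd' hij.le).1 (Fin.ext_iff.1 h)
  have := Nat.le_of_dvd (by omega) hdvd
  omega

theorem isAffineTemperleyLieb_shiftedGen (hd : 1 ≤ d) :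
    IsAffineTemperleyLieb q d (shiftedGen q (d + 2)) where
  periodic i := by simp [shiftedGen, Fin.ofNat]
  sq i := add_one_mul_self (gen_sq (by omega) _)
  up i := by
    rw [shiftedGen, shiftedGen, ← csucc_ofNat]
    exact add_one_mul_add_one_mul_add_one (gen_sq (by omega) _) (gen_temperleyLieb (by omega) _)
  down i := by
    rw [shiftedGen, shiftedGen, ← csucc_ofNat]
    refine add_one_mul_add_one_mul_add_one (gen_sq (by omega) _) ?_
    rw [← gen_braid (by omega), ← gen_temperleyLieb (q := q) (by omega) (Fin.ofNat (d + 2) i)]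
    abel
  comm i j hij hj := by
    refine Commute.add_left (Commute.add_right (gen_commute (by omega) ?_ ?_ ?_)
      (Commute.one_right _)) (Commute.one_left _)
    · exact ofNat_ne_ofNat (by omega) (by omega)
    · rw [csucc_ofNat]
      exact (ofNat_ne_ofNat (by omega) (by omega)).symm
    · rw [csucc_ofNat]
      exact ofNat_ne_ofNat (by omega) (by omega)

theorem exists_mem_wordSpan_shiftedGen [NeZero m] (x : ATL K q m) :
    ∃ k, x ∈ wordSpan K (shiftedGen q m) (Set.Iio m) k := by
  refine exists_mem_wordSpan (top_le_iff.1 ?_) x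
  rw [← adjoin_range_gen, Algebra.adjoin_le_iff]
  rintro _ ⟨i, rfl⟩
  have hi := Algebra.subset_adjoin (R := K)
    (Set.mem_image_of_mem (shiftedGen q m) (Set.mem_Iio.2 i.isLt))
  simpa [shiftedGen_of_lt i.isLt] using sub_mem hi (one_mem _)

theorem conj_add_one_eq_foldedGen {A : Type*} [Ring A] [Algebra K A] {e : ℕ → A}
    (he : IsAffineTemperleyLieb q d e) (hq : IsUnit q) :
    (e d - 1) * (e (d + 1) - 1) * qinv q (e d - 1) + 1 = foldedGen (Ring.inverse q) e d := by
  have hu : Ring.inverse q * q = 1 := Ring.inverse_mul_cancel q hq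
  have hexpand : (e d - 1) * (e (d + 1) - 1) * (e d - 1 - algebraMap K A (q - 1)) =
      q • (e d + e (d + 1) - e d * e (d + 1) - 1) - e (d + 1) * e d := by
    simp only [Algebra.algebraMap_eq_smul_one, sub_mul, mul_sub, mul_smul_comm, mul_one, one_mul,
      he.up, he.sq]
    module
  rw [qinv, mul_smul_comm, hexpand, smul_sub, smul_smul, hu, foldedGen]
  module

theorem isMarkovNull_sub {M : Type*} [AddCommGroup M] [Module K M] (hd : 1 ≤ d) (hq : IsUnit q)
    {F : ATL K q (d + 1) →ₐ[K] ATL K q (d + 2)} (hF : isF q (d + 1) (by omega) F)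
    {τ τ' : ATL K q (d + 2) →ₗ[K] M} (hτ : ∀ x y, τ (x * y) = τ (y * x))
    (hτ' : ∀ x y, τ' (x * y) = τ' (y * x))
    (hMarkov : ∀ m, IsMarkov (d + 1) (by omega) F m → τ m = τ' m) :
    IsMarkovNull (Ring.inverse q) (shiftedGen q (d + 2)) d F.range (τ - τ') where
  trace x y := by simp only [LinearMap.sub_apply, hτ x y, hτ' x y]
  gen_mem i hi := by
    rw [shiftedGen_of_lt (by omega)]
    exact add_mem ⟨_, hF.1 i hi⟩ (one_mem _)
  foldedGen_mem := by
    rw [← conj_add_one_eq_foldedGen (isAffineTemperleyLieb_shiftedGen hd) hq,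
      shiftedGen_of_lt (by omega), shiftedGen_of_lt (by omega), add_sub_cancel_right,
      add_sub_cancel_right]
    exact add_mem ⟨_, hF.2⟩ (one_mem _)
  map_mem b hb := sub_eq_zero.2 (hMarkov b ⟨b, 1, hb, one_mem _, Or.inl (mul_one b).symm⟩)
  map_mul_mul a ha b hb := by
    rw [shiftedGen_of_lt (by omega), mul_add, mul_one, add_mul, LinearMap.sub_apply, map_add,
      map_add, sub_eq_zero]
    exact congrArg₂ (· + ·) (hMarkov _ ⟨a, b, ha, hb, Or.inr rfl⟩)
      (hMarkov _ ⟨a, b, ha, hb, Or.inl rfl⟩)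

theorem statement12_general {M : Type*} [AddCommGroup M] [Module K M]
    (hq : IsUnit q) {n : ℕ} (hn : 2 ≤ n)
    {F : ATL K q n →ₐ[K] ATL K q (n + 1)} (hF : isF q n hn F)
    {τ τ' : ATL K q (n + 1) →ₗ[K] M} (hτ : ∀ x y, τ (x * y) = τ (y * x))
    (hτ' : ∀ x y, τ' (x * y) = τ' (y * x))
    (hMarkov : ∀ m, IsMarkov n (one_le_two.trans hn) F m → τ m = τ' m) : τ = τ' := by
  obtain ⟨d, rfl⟩ : ∃ d, n = d + 1 := ⟨n - 1, by omega⟩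
  have hnull := isMarkovNull_sub (by omega) hq hF hτ hτ' hMarkov
  ext x
  obtain ⟨k, hk⟩ := exists_mem_wordSpan_shiftedGen x
  exact sub_eq_zero.1 (hnull.map_eq_zero (isAffineTemperleyLieb_shiftedGen (by omega))
    (Ring.inverse_mul_cancel q hq) k hk)

end Presentation

end AffineTL

open AffineTL in
/-- Theorem 5.1.1: for `n ≥ 2`, a trace on `TLhat_{n+1}(q)` is uniquely
determined by its values on Markov elements. -/
theorem statement12 {K : Type*} [CommRing K] [IsDomain K] [CharZero K]
    (q sq : K) (hsq : sq * sq = q) (hq : IsUnit q) (hq1 : IsUnit (q + 1))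
    (n : ℕ) (hn : 2 ≤ n)
    (F : ATL K q n →ₐ[K] ATL K q (n + 1)) (hF : isF q n hn F)
    (τ τ' : ATL K q (n + 1) →ₗ[K] K) (hτ : IsTrace τ) (hτ' : IsTrace τ')
    (hMarkov : ∀ m : ATL K q (n + 1), IsMarkov n (by omega) F m → τ m = τ' m) :
    τ = τ' :=
  statement12_general hq hn hF hτ hτ' hMarkov
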